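/- arXiv:2603.05007 — 3 statements merged into one kernel-verified Lean document; each statement's English description precedes it below -/
import Mathlib

section
/- Let V be a finite set, p a pairing of V, and let k and s be positive integers. Let F be a finite family of k-element subsets of V. Then the sum, over all transversals S of p, of the number of sets e ∈ F with |e ∩ S| ≥ s equals ∑_{e ∈ F} 2^{|V|/2 − i(e)} · (∑_{j=0}^{i(e)} [k − i(e) + 2j ≥ 2s] · C(i(e), j)), where [·] equals 1 if the condition holds and 0 otherwise and C denotes the binomial coefficient. (Equivalently: if each pair independently contributes a uniformly random one of its two elements to S, then |e ∩ S| is distributed as (k − i(e))/2 plus a Binomial(i(e), 1/2) random variable, so the probability that |e ∩ S| ≥ s is p_{s,i(e)}.) -/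
open Finset

/-!
Let `U` be the set of elements of `e` whose partner lies outside `e`. The rest of `e` consists of
whole pairs, each meeting a transversal `S` in exactly one point, so `#(e ∩ S)` depends only on
`#(S ∩ U)`. Extend `U` to a transversal `T`: then `S ↦ S ∩ T` is a bijection from the transversals
onto the subsets of `T`, and `#T = #V / 2`. Hence every subset of `U` is the trace of exactly
`2 ^ (#V / 2 - #U)` transversals, and it remains to sort the subsets of `U` by cardinality.
-/

section Powerset

variable {V M : Type*} [DecidableEq V]

theorem filter_powerset_inter_eq_Icc {B U T : Finset V} (hBU : B ⊆ U) (hUT : U ⊆ T) :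
    {A ∈ T.powerset | A ∩ U = B} = Icc B (B ∪ T \ U) := by
  ext A
  simp only [mem_filter, mem_powerset, mem_Icc]
  grind

theorem card_filter_powerset_inter_eq {B U T : Finset V} (hBU : B ⊆ U) (hUT : U ⊆ T) :
    #{A ∈ T.powerset | A ∩ U = B} = 2 ^ (#T - #U) := by
  rw [filter_powerset_inter_eq_Icc hBU hUT, card_Icc_finset subset_union_left,
    card_union_of_disjoint (disjoint_sdiff.mono_left hBU), card_sdiff_of_subset hUT,
    Nat.add_sub_cancel_left]

theorem sum_powerset_comp_inter [AddCommMonoid M] {U T : Finset V} (hUT : U ⊆ T)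
    (f : Finset V → M) :
    ∑ A ∈ T.powerset, f (A ∩ U) = 2 ^ (#T - #U) • ∑ B ∈ U.powerset, f B := by
  have maps_to : ∀ A ∈ T.powerset, A ∩ U ∈ U.powerset := fun A _ =>
    mem_powerset.2 inter_subset_right
  rw [← sum_fiberwise_of_maps_to' maps_to f, smul_sum]
  exact sum_congr rfl fun B hB => by
    rw [sum_const, card_filter_powerset_inter_eq (mem_powerset.1 hB) hUT]

end Powerset

/-- `S` contains exactly one element of each pair `{v, p v}`. -/
def IsTransversal {V : Type*} (p : V → V) (S : Finset V) : Prop :=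
  ∀ v, v ∈ S ↔ p v ∉ S

instance {V : Type*} [Fintype V] [DecidableEq V] (p : V → V) :
    DecidablePred (IsTransversal p) :=
  fun S => inferInstanceAs (Decidable (∀ v, v ∈ S ↔ p v ∉ S))

/-- The elements of `e` whose partner under `p` lies outside `e`; the cardinality of this set is
the paper's `i(e)`. -/
def unpaired {V : Type*} [DecidableEq V] (p : V → V) (e : Finset V) : Finset V :=
  {v ∈ e | p v ∉ e}

theorem notMem_unpaired_of_mem_unpaired {V : Type*} [DecidableEq V] {p : V → V} {e : Finset V}
    {v : V} (hv : v ∈ unpaired p e) : p v ∉ unpaired p e :=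
  fun hpv => (mem_filter.1 hv).2 (mem_filter.1 hpv).1

theorem exists_isTransversal_superset {V : Type*} [Finite V] {p : V → V} (hp : p.Involutive)
    (hne : ∀ v, p v ≠ v) {U : Finset V} (hU : ∀ v ∈ U, p v ∉ U) :
    ∃ T, U ⊆ T ∧ IsTransversal p T := by
  classical
  obtain ⟨T, hUT, hT⟩ :=
    Finite.exists_le_maximal (p := fun T : Finset V => ∀ v ∈ T, p v ∉ T) hU
  refine ⟨T, hUT, fun v => ⟨hT.prop v, fun hpv => ?_⟩⟩
  have insert_free : ∀ w ∈ insert v T, p w ∉ insert v T := by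
    have := hT.prop
    grind [Function.Involutive]
  exact hT.le_of_ge insert_free (subset_insert v T) (mem_insert_self v T)

namespace IsTransversal

variable {V M : Type*} {p : V → V}

section Card

variable [DecidableEq V]

theorem card_sdiff_eq_card_inter {E S : Finset V} (hS : IsTransversal p S)
    (hp : p.Involutive) (hE : ∀ v ∈ E, p v ∈ E) : #(E \ S) = #(E ∩ S) := by
  refine card_nbij' p p (fun v hv => ?_) (fun v hv => ?_) (fun v _ => hp v) (fun v _ => hp v)
  · rw [mem_coe, mem_sdiff] at hv
    exact mem_coe.2 (mem_inter.2 ⟨hE v hv.1, not_not.1 (mt (hS v).2 hv.2)⟩)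
  · rw [mem_coe, mem_inter] at hv
    exact mem_coe.2 (mem_sdiff.2 ⟨hE v hv.1, (hS v).1 hv.2⟩)

theorem two_mul_card_inter {E S : Finset V} (hS : IsTransversal p S) (hp : p.Involutive)
    (hE : ∀ v ∈ E, p v ∈ E) : 2 * #(E ∩ S) = #E := by
  rw [← card_sdiff_add_card_inter E S, hS.card_sdiff_eq_card_inter hp hE, two_mul]

theorem two_mul_card_inter_add_card_unpaired {S : Finset V} (hS : IsTransversal p S)
    (hp : p.Involutive) (e : Finset V) :
    2 * #(e ∩ S) + #(unpaired p e) = #e + 2 * #(S ∩ unpaired p e) := by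
  have paired_half : 2 * #({v ∈ e | p v ∈ e} ∩ S) = #{v ∈ e | p v ∈ e} :=
    hS.two_mul_card_inter hp fun v hv => by
      rw [mem_filter] at hv ⊢
      exact ⟨hv.2, (hp v).symm ▸ hv.1⟩
  have split_e : #{v ∈ e | p v ∈ e} + #(unpaired p e) = #e :=
    card_filter_add_card_filter_not _
  have split_inter : #({v ∈ e | p v ∈ e} ∩ S) + #(S ∩ unpaired p e) = #(e ∩ S) := by
    rw [inter_comm S, unpaired, filter_inter, filter_inter]
    exact card_filter_add_card_filter_not _
  lia

end Card

theorem card_eq_card_div_two [Fintype V] {S : Finset V} (hS : IsTransversal p S)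
    (hp : p.Involutive) : #S = Fintype.card V / 2 := by
  classical
  have two_mul_card : 2 * #S = Fintype.card V := by
    simpa using hS.two_mul_card_inter hp (E := univ) fun v _ => mem_univ (p v)
  lia

section Trace

variable [DecidableEq V] {A S T : Finset V}

theorem image_sdiff (hS : IsTransversal p S) (hT : IsTransversal p T) (hp : p.Involutive) :
    (T \ S).image p = S \ T := by
  ext v
  have mem_swap : p v ∈ T \ S ↔ v ∈ S \ T := by
    rw [mem_sdiff, mem_sdiff, hS v, hT v, not_not, and_comm]
  rw [← mem_swap, mem_image]
  exact ⟨fun ⟨w, hw, hwv⟩ => by rwa [← hwv, hp w], fun hv => ⟨p v, hv, hp v⟩⟩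

theorem inter_union_image_sdiff (hS : IsTransversal p S) (hT : IsTransversal p T)
    (hp : p.Involutive) : S ∩ T ∪ (T \ (S ∩ T)).image p = S := by
  rw [sdiff_inter_self_right, hS.image_sdiff hT hp, union_comm, sdiff_union_inter]

theorem union_image_sdiff_inter (hT : IsTransversal p T) (hA : A ⊆ T) :
    (A ∪ (T \ A).image p) ∩ T = A := by
  have disjoint_image : Disjoint ((T \ A).image p) T := by
    simp only [disjoint_left, forall_mem_image]
    exact fun v hv => (hT v).1 (mem_sdiff.1 hv).1
  rw [union_inter_distrib_right, inter_eq_left.2 hA, disjoint_iff_inter_eq_empty.1 disjoint_image,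
    union_empty]

theorem union_image_sdiff (hT : IsTransversal p T) (hp : p.Involutive) (hA : A ⊆ T) :
    IsTransversal p (A ∪ (T \ A).image p) := by
  intro v
  have := hp v
  have := hT v
  grind [Function.Involutive]

theorem sum_comp_inter [Fintype V] [AddCommMonoid M] (hT : IsTransversal p T)
    (hp : p.Involutive) (f : Finset V → M) :
    ∑ S with IsTransversal p S, f (S ∩ T) = ∑ A ∈ T.powerset, f A := by
  refine sum_nbij' (· ∩ T) (fun A => A ∪ (T \ A).image p) ?_ ?_ ?_ ?_ fun S _ => rfl
  · exact fun S _ => mem_powerset.2 inter_subset_right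
  · exact fun A hA => (mem_filter_univ _).2 (hT.union_image_sdiff hp (mem_powerset.1 hA))
  · exact fun S hS => ((mem_filter_univ S).1 hS).inter_union_image_sdiff hT hp
  · exact fun A hA => hT.union_image_sdiff_inter (mem_powerset.1 hA)

end Trace

end IsTransversal

section Count

variable {V M : Type*} [Fintype V] [DecidableEq V] {p : V → V}

theorem sum_isTransversal_comp_inter [AddCommMonoid M] (hp : p.Involutive)
    (hne : ∀ v, p v ≠ v) {U : Finset V} (hU : ∀ v ∈ U, p v ∉ U) (f : Finset V → M) :
    ∑ S with IsTransversal p S, f (S ∩ U) =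
      2 ^ (Fintype.card V / 2 - #U) • ∑ B ∈ U.powerset, f B := by
  obtain ⟨T, hUT, hT⟩ := exists_isTransversal_superset hp hne hU
  calc ∑ S with IsTransversal p S, f (S ∩ U)
      = ∑ S with IsTransversal p S, f (S ∩ T ∩ U) := by
        simp only [inter_assoc, inter_eq_right.2 hUT]
    _ = ∑ A ∈ T.powerset, f (A ∩ U) := hT.sum_comp_inter hp fun A => f (A ∩ U)
    _ = 2 ^ (Fintype.card V / 2 - #U) • ∑ B ∈ U.powerset, f B := by
        rw [sum_powerset_comp_inter hUT, hT.card_eq_card_div_two hp]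

theorem card_isTransversal_and_le_card_inter (hp : p.Involutive) (hne : ∀ v, p v ≠ v)
    (s : ℕ) (e : Finset V) :
    #{S | IsTransversal p S ∧ s ≤ #(e ∩ S)} =
      2 ^ (Fintype.card V / 2 - #(unpaired p e)) * ∑ j ∈ range (#(unpaired p e) + 1),
        if #e + 2 * j ≥ 2 * s + #(unpaired p e) then (#(unpaired p e)).choose j else 0 := by
  let g (j : ℕ) : ℕ := if #e + 2 * j ≥ 2 * s + #(unpaired p e) then 1 else 0
  have indicator_eq (S : Finset V) (hS : IsTransversal p S) :
      (if s ≤ #(e ∩ S) then 1 else 0) = g #(S ∩ unpaired p e) := by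
    have := hS.two_mul_card_inter_add_card_unpaired hp e
    exact if_congr (by lia) rfl rfl
  calc #{S | IsTransversal p S ∧ s ≤ #(e ∩ S)}
      = ∑ S with IsTransversal p S, g #(S ∩ unpaired p e) := by
        rw [← filter_filter, card_filter]
        exact sum_congr rfl fun S hS => indicator_eq S ((mem_filter_univ S).1 hS)
    _ = 2 ^ (Fintype.card V / 2 - #(unpaired p e)) * ∑ B ∈ (unpaired p e).powerset, g #B :=
        sum_isTransversal_comp_inter hp hne (fun v => notMem_unpaired_of_mem_unpaired)
          fun B => g #B
    _ = _ := by
        rw [sum_powerset_apply_card]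
        simp only [g, smul_eq_mul, mul_ite, mul_one, mul_zero]

theorem sum_over_transversals_eq_general (hp : p.Involutive) (hne : ∀ v, p v ≠ v) (s : ℕ)
    (F : Finset (Finset V)) :
    ∑ S with IsTransversal p S, #{e ∈ F | s ≤ #(e ∩ S)} =
      ∑ e ∈ F, 2 ^ (Fintype.card V / 2 - #(unpaired p e)) *
        ∑ j ∈ range (#(unpaired p e) + 1),
          if #e + 2 * j ≥ 2 * s + #(unpaired p e) then (#(unpaired p e)).choose j else 0 := by
  calc ∑ S with IsTransversal p S, #{e ∈ F | s ≤ #(e ∩ S)}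
      = ∑ e ∈ F, #{S | IsTransversal p S ∧ s ≤ #(e ∩ S)} := by
        simp only [← filter_filter]
        exact sum_card_bipartiteAbove_eq_sum_card_bipartiteBelow fun S e => s ≤ #(e ∩ S)
    _ = _ := sum_congr rfl fun e _ => card_isTransversal_and_le_card_inter hp hne s e

end Count

/-- For a pairing `p` (fixed-point-free involution) of a finite set `V` and a family `F`
of `k`-element subsets of `V`, the sum over all transversals `S` of `p` of the number of
sets `e ∈ F` with `|e ∩ S| ≥ s` equals
`∑_{e ∈ F} 2^{|V|/2 − i(e)} · ∑_{j=0}^{i(e)} [k − i(e) + 2j ≥ 2s] · C(i(e), j)`,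
where `i(e)` is the number of `v ∈ e` with `p v ∉ e`. -/
theorem sum_over_transversals_eq {V : Type*} [Fintype V] [DecidableEq V]
    (p : V → V) (hp_inv : ∀ v, p (p v) = v) (hp_ne : ∀ v, p v ≠ v)
    (k s : ℕ) (hk : 0 < k) (hs : 0 < s)
    (F : Finset (Finset V)) (hF : ∀ e ∈ F, e.card = k) :
    ∑ S ∈ Finset.univ.filter (fun S : Finset V => ∀ v, v ∈ S ↔ p v ∉ S),
        (F.filter (fun e => s ≤ (e ∩ S).card)).card
      = ∑ e ∈ F,
          2 ^ (Fintype.card V / 2 - (e.filter (fun v => p v ∉ e)).card) *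
            ∑ j ∈ Finset.range ((e.filter (fun v => p v ∉ e)).card + 1),
              (if k + 2 * j ≥ 2 * s + (e.filter (fun v => p v ∉ e)).card
                then Nat.choose (e.filter (fun v => p v ∉ e)).card j else 0) := by
  refine (sum_over_transversals_eq_general hp_inv hp_ne s F).trans (sum_congr rfl fun e he => ?_)
  rw [hF e he, unpaired]
end

section
/- Let V be a finite set and F a finite family of n k-element subsets of V such that every element of V belongs to exactly ℓ members of F and every pair of distinct elements of V belongs to at most q members of F, where q ≤ ℓ. Then for every pairing p of V one has ℓ · ∑_{e ∈ F} i(e) ≥ (ℓ − q) · k · n. -/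
open Finset

/-! Call an incidence `v ∈ e` paired if `p v ∈ e`, and write `S` and `I` for the numbers of all and
of unpaired incidences, `W` for the set of covered vertices. A vertex has at most `q` paired
incidences, so `S ≤ I + |W| q`. Multiplying by a lower bound `ℓ` on the degrees and using
`|W| ℓ ≤ S` gives `ℓ S ≤ ℓ I + q S`. -/

section IndexedFamily

variable {V ι : Type*} [DecidableEq V] {s : Finset ι} {A : ι → Finset V}

theorem sum_card_filter_eq_sum_biUnion (P : V → ι → Prop) [∀ v i, Decidable (P v i)] :
    ∑ i ∈ s, #{v ∈ A i | P v i} = ∑ v ∈ s.biUnion A, #{i ∈ s | v ∈ A i ∧ P v i} :=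
  calc
    ∑ i ∈ s, #{v ∈ A i | P v i} = ∑ i ∈ s, #{v ∈ s.biUnion A | v ∈ A i ∧ P v i} := by
      refine sum_congr rfl fun i hi ↦ ?_
      rw [← filter_filter, filter_mem_eq_inter,
        inter_eq_right.mpr (subset_biUnion_of_mem A hi)]
    _ = ∑ v ∈ s.biUnion A, #{i ∈ s | v ∈ A i ∧ P v i} :=
      (sum_card_bipartiteAbove_eq_sum_card_bipartiteBelow fun v i ↦ v ∈ A i ∧ P v i).symm

theorem card_biUnion_mul_le_sum_card {ℓ : ℕ}
    (hℓ : ∀ v ∈ s.biUnion A, ℓ ≤ #{i ∈ s | v ∈ A i}) :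
    #(s.biUnion A) * ℓ ≤ ∑ i ∈ s, #(A i) :=
  calc
    #(s.biUnion A) * ℓ ≤ ∑ v ∈ s.biUnion A, #{i ∈ s | v ∈ A i} := card_nsmul_le_sum _ _ ℓ hℓ
    _ = ∑ i ∈ s, #(A i) := by
      simpa only [filter_true, and_true] using
        (sum_card_filter_eq_sum_biUnion (s := s) (A := A) fun _ _ ↦ True).symm

variable {p : V → V} {q : ℕ}

theorem sum_card_paired_le (hq : ∀ v ∈ s.biUnion A, #{i ∈ s | v ∈ A i ∧ p v ∈ A i} ≤ q) :
    ∑ i ∈ s, #{v ∈ A i | p v ∈ A i} ≤ #(s.biUnion A) * q :=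
  calc
    ∑ i ∈ s, #{v ∈ A i | p v ∈ A i} = ∑ v ∈ s.biUnion A, #{i ∈ s | v ∈ A i ∧ p v ∈ A i} :=
      sum_card_filter_eq_sum_biUnion fun v i ↦ p v ∈ A i
    _ ≤ #(s.biUnion A) * q := sum_le_card_nsmul _ _ q hq

theorem sum_card_le_sum_card_unpaired_add
    (hq : ∀ v ∈ s.biUnion A, #{i ∈ s | v ∈ A i ∧ p v ∈ A i} ≤ q) :
    ∑ i ∈ s, #(A i) ≤ ∑ i ∈ s, #{v ∈ A i | p v ∉ A i} + #(s.biUnion A) * q :=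
  calc
    ∑ i ∈ s, #(A i) = ∑ i ∈ s, #{v ∈ A i | p v ∉ A i} + ∑ i ∈ s, #{v ∈ A i | p v ∈ A i} := by
      simp only [← sum_add_distrib, add_comm, card_filter_add_card_filter_not]
    _ ≤ ∑ i ∈ s, #{v ∈ A i | p v ∉ A i} + #(s.biUnion A) * q := by
      gcongr
      exact sum_card_paired_le hq

theorem sum_unpaired_ge_general {ℓ : ℕ}
    (hℓ : ∀ v ∈ s.biUnion A, ℓ ≤ #{i ∈ s | v ∈ A i})
    (hq : ∀ v ∈ s.biUnion A, #{i ∈ s | v ∈ A i ∧ p v ∈ A i} ≤ q) :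
    ℓ * ∑ i ∈ s, #(A i) ≤ ℓ * ∑ i ∈ s, #{v ∈ A i | p v ∉ A i} + q * ∑ i ∈ s, #(A i) :=
  calc
    ℓ * ∑ i ∈ s, #(A i) ≤ ℓ * (∑ i ∈ s, #{v ∈ A i | p v ∉ A i} + #(s.biUnion A) * q) := by
      gcongr
      exact sum_card_le_sum_card_unpaired_add hq
    _ = ℓ * ∑ i ∈ s, #{v ∈ A i | p v ∉ A i} + q * (#(s.biUnion A) * ℓ) := by ring
    _ ≤ ℓ * ∑ i ∈ s, #{v ∈ A i | p v ∉ A i} + q * ∑ i ∈ s, #(A i) := by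
      gcongr
      exact card_biUnion_mul_le_sum_card hℓ

end IndexedFamily

/-- If `F` is a family of `n` sets of size `k` on a finite set `V`, every vertex lies in
exactly `ℓ` members of `F`, every pair of distinct vertices lies in at most `q ≤ ℓ`
members of `F`, then for every pairing `p` of `V` we have
`ℓ · ∑_{e ∈ F} i(e) ≥ (ℓ − q) · k · n`, where `i(e)` is the number of `v ∈ e` with
`p v ∉ e`. -/
theorem sum_unpaired_ge {V : Type*} [Fintype V] [DecidableEq V]
    (n k ℓ q : ℕ) (hq : q ≤ ℓ)
    (F : Finset (Finset V)) (hn : F.card = n)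
    (hk : ∀ e ∈ F, e.card = k)
    (hℓ : ∀ v : V, (F.filter (fun e => v ∈ e)).card = ℓ)
    (hqF : ∀ u v : V, u ≠ v → (F.filter (fun e => u ∈ e ∧ v ∈ e)).card ≤ q)
    (p : V → V) (hp_inv : ∀ v, p (p v) = v) (hp_ne : ∀ v, p v ≠ v) :
    (ℓ - q) * (k * n) ≤ ℓ * ∑ e ∈ F, (e.filter (fun v => p v ∉ e)).card := by
  rw [mul_comm k n, ← hn, ← sum_const_nat hk, Nat.sub_mul, Nat.sub_le_iff_le_add]
  exact sum_unpaired_ge_general (A := id) (fun v _ ↦ (hℓ v).ge)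
    fun v _ ↦ hqF v (p v) (hp_ne v).symm
end

section
/- Let V be a finite set and F a finite family of n three-element subsets of V such that every element of V belongs to exactly 6 members of F and every pair of distinct elements of V belongs to at most 2 members of F. Then for every pairing p of V there exists a transversal S of p such that at least n/16 members of F are disjoint from S; equivalently, the number of e ∈ F with e ∩ S ≠ ∅ is at most 15n/16. -/
open Finset

/-!
Choose a transversal `S` of `p` uniformly at random. An edge `e` containing no pair of `p` meets `S`
in each of its `2 ^ #e` subsets with the same probability, because exchanging `S` with its
complement on the pairs that meet `U ⊆ e` swaps the events `e ∩ S = U` and `e ∩ S = ∅`. So `S`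
misses such an edge with probability `2⁻¹ ^ #e`. An edge containing a pair is never missed, but
counting incidences of edges with pairs shows that at most half of the triples are of this kind.
-/

/-- The transversals of a pairing `p`: the sets containing exactly one of `v`, `p v` for each `v`.
They form the finite sample space of the averaging argument. -/
def transversals {V : Type*} [Fintype V] [DecidableEq V] (p : V → V) : Finset (Finset V) :=
  {S | ∀ v, v ∈ S ↔ p v ∉ S}

/-- A set is pair-free for `p` if it contains no pair `{v, p v}`. This is an abbreviation so that
decidability, needed to filter families by it, is inferred from the right-hand side. -/
abbrev PairFree {V : Type*} (p : V → V) (e : Finset V) : Prop :=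
  ∀ v ∈ e, p v ∉ e

section Pairing

variable {V : Type*} [DecidableEq V] {p : V → V}

theorem card_filter_inter_eq_empty_add_card_filter_inter_nonempty (F : Finset (Finset V))
    (S : Finset V) : #{e ∈ F | e ∩ S = ∅} + #{e ∈ F | (e ∩ S).Nonempty} = #F := by
  simpa only [nonempty_iff_ne_empty] using card_filter_add_card_filter_not (s := F) (· ∩ S = ∅)

variable [Fintype V] {F : Finset (Finset V)}

theorem mem_transversals {S : Finset V} : S ∈ transversals p ↔ ∀ v, v ∈ S ↔ p v ∉ S := by
  simp [transversals]

theorem transversals_nonempty (hp : p.Involutive) (hp_ne : ∀ v, p v ≠ v) :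
    (transversals p).Nonempty := by
  let f := Fintype.equivFin V
  refine ⟨({v | f v < f (p v)} : Finset V), mem_transversals.2 fun v ↦ ?_⟩
  have hne : f v ≠ f (p v) := f.injective.ne (hp_ne v).symm
  simpa [hp v] using hne.le_iff_lt.symm

theorem symmDiff_mem_transversals {S W : Finset V} (hS : S ∈ transversals p)
    (hW : ∀ v, p v ∈ W ↔ v ∈ W) : symmDiff S W ∈ transversals p := by
  rw [mem_transversals] at hS ⊢
  intro v
  have hSv := hS v
  simp only [mem_symmDiff, hW]
  tauto

theorem card_transversals_inter_eq {e U : Finset V} (hp : p.Involutive) (he : PairFree p e)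
    (hU : U ⊆ e) :
    #{S ∈ transversals p | e ∩ S = U} = #{S ∈ transversals p | e ∩ S = ∅} := by
  let W : Finset V := {v | v ∈ U ∨ p v ∈ U}
  have hW (v : V) : p v ∈ W ↔ v ∈ W := by simp [W, hp v, or_comm]
  have heW : e ∩ W = U := by
    ext v
    have hpv : v ∈ e → p v ∉ U := fun hv hpv ↦ he v hv (hU hpv)
    have hv : v ∈ U → v ∈ e := fun hv ↦ hU hv
    simp only [W, mem_inter, mem_filter_univ]
    tauto
  have inter_flip (S : Finset V) : e ∩ symmDiff S W = symmDiff (e ∩ S) U := by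
    rw [← heW]
    exact inf_symmDiff_distrib_left e S W
  refine card_nbij' (symmDiff · W) (symmDiff · W) ?_ ?_
    (fun S _ ↦ symmDiff_symmDiff_cancel_right W S) (fun S _ ↦ symmDiff_symmDiff_cancel_right W S)
  all_goals
    intro S hS
    obtain ⟨hS, heS⟩ := mem_filter.1 hS
    exact mem_filter.2 ⟨symmDiff_mem_transversals hS hW, by simp [inter_flip, heS]⟩

theorem two_pow_card_mul_card_transversals_inter_eq_empty {e : Finset V} (hp : p.Involutive)
    (he : PairFree p e) :
    2 ^ #e * #{S ∈ transversals p | e ∩ S = ∅} = #(transversals p) := by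
  calc
    2 ^ #e * #{S ∈ transversals p | e ∩ S = ∅}
        = ∑ U ∈ e.powerset, #{S ∈ transversals p | e ∩ S = U} := by
      rw [← card_powerset, ← smul_eq_mul]
      exact (sum_eq_card_nsmul fun U hU ↦
        card_transversals_inter_eq hp he (mem_powerset.1 hU)).symm
    _ = #(transversals p) :=
      (card_eq_sum_card_fiberwise fun S _ ↦ mem_powerset.2 inter_subset_left).symm

theorem exists_mem_transversals_card_le_two_pow_mul {k : ℕ} (hp : p.Involutive)
    (hp_ne : ∀ v, p v ≠ v) (hF : ∀ e ∈ F, #e ≤ k) (hfree : ∀ e ∈ F, PairFree p e) :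
    ∃ S ∈ transversals p, #F ≤ 2 ^ k * #{e ∈ F | e ∩ S = ∅} := by
  refine exists_le_of_sum_le (transversals_nonempty hp hp_ne) ?_
  calc
    ∑ _S ∈ transversals p, #F = ∑ _e ∈ F, #(transversals p) := by
      simp only [sum_const, smul_eq_mul, mul_comm]
    _ ≤ ∑ e ∈ F, 2 ^ k * #{S ∈ transversals p | e ∩ S = ∅} := by
      refine sum_le_sum fun e he ↦ ?_
      rw [← two_pow_card_mul_card_transversals_inter_eq_empty hp (hfree e he)]
      gcongr
      exacts [one_le_two, hF e he]
    _ = ∑ S ∈ transversals p, 2 ^ k * #{e ∈ F | e ∩ S = ∅} := by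
      rw [← mul_sum, ← mul_sum]
      exact congrArg _
        (sum_card_bipartiteAbove_eq_sum_card_bipartiteBelow fun e S ↦ e ∩ S = ∅)

theorem card_not_pairFree_mul_two_le {q : ℕ} (hp : p.Involutive) (hp_ne : ∀ v, p v ≠ v)
    (hpair : ∀ v, #{e ∈ F | v ∈ e ∧ p v ∈ e} ≤ q) :
    #{e ∈ F | ¬PairFree p e} * 2 ≤ Fintype.card V * q := by
  refine card_mul_le_card_mul (fun e v ↦ v ∈ e ∧ p v ∈ e) (fun e he ↦ ?_) fun v _ ↦
    (card_le_card (filter_subset_filter _ (filter_subset _ F))).trans (hpair v)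
  obtain ⟨v, hv, hpv⟩ : ∃ v ∈ e, p v ∈ e := by simpa using (mem_filter.1 he).2
  rw [← card_pair (hp_ne v)]
  refine card_le_card ?_
  simp [insert_subset_iff, bipartiteAbove, hv, hpv, hp v]

theorem triangle_s1_pairing_upper_general {k ℓ q : ℕ} (hF : ∀ e ∈ F, #e ≤ k)
    (hdeg : ∀ v, ℓ ≤ #{e ∈ F | v ∈ e}) (hp : p.Involutive) (hp_ne : ∀ v, p v ≠ v)
    (hpair : ∀ v, #{e ∈ F | v ∈ e ∧ p v ∈ e} ≤ q) :
    ∃ S ∈ transversals p,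
      2 * ℓ * #F ≤ q * k * #F + 2 * ℓ * 2 ^ k * #{e ∈ F | e ∩ S = ∅} := by
  obtain ⟨S, hS, hfree⟩ := exists_mem_transversals_card_le_two_pow_mul
    (F := {e ∈ F | PairFree p e}) hp hp_ne (fun e he ↦ hF e (mem_filter.1 he).1)
    fun e he ↦ (mem_filter.1 he).2
  have hmono : #{e ∈ {e ∈ F | PairFree p e} | e ∩ S = ∅} ≤ #{e ∈ F | e ∩ S = ∅} :=
    card_le_card (filter_subset_filter _ (filter_subset _ F))
  have hvertices : Fintype.card V * ℓ ≤ #F * k :=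
    (le_sum_card hdeg).trans (sum_le_card_nsmul F _ k hF)
  have hpaired := card_not_pairFree_mul_two_le hp hp_ne hpair
  refine ⟨S, hS, ?_⟩
  calc
    2 * ℓ * #F
        = ℓ * (#{e ∈ F | ¬PairFree p e} * 2) + 2 * ℓ * #{e ∈ F | PairFree p e} := by
      rw [← card_filter_add_card_filter_not (s := F) (PairFree p)]
      ring
    _ ≤ ℓ * (Fintype.card V * q) + 2 * ℓ * (2 ^ k * #{e ∈ F | e ∩ S = ∅}) := by
      gcongr
      exact hfree.trans (by gcongr)
    _ = q * (Fintype.card V * ℓ) + 2 * ℓ * 2 ^ k * #{e ∈ F | e ∩ S = ∅} := by ring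
    _ ≤ q * (#F * k) + 2 * ℓ * 2 ^ k * #{e ∈ F | e ∩ S = ∅} := by gcongr
    _ = q * k * #F + 2 * ℓ * 2 ^ k * #{e ∈ F | e ∩ S = ∅} := by ring

end Pairing

/-- Triangle game on the triangular grid (`k = 3`, `ℓ = 6`, `q = 2`), threshold `s = 1`:
for every pairing `p` there is a transversal `S` such that at least `n/16` members of `F`
are disjoint from `S`; equivalently, at most `15n/16` members of `F` meet `S`. -/
theorem triangle_s1_pairing_upper {V : Type*} [Fintype V] [DecidableEq V]
    (n : ℕ) (F : Finset (Finset V)) (hn : F.card = n)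
    (hF : ∀ e ∈ F, e.card = 3)
    (hdeg : ∀ v : V, (F.filter (fun e => v ∈ e)).card = 6)
    (hpair : ∀ u v : V, u ≠ v → (F.filter (fun e => u ∈ e ∧ v ∈ e)).card ≤ 2)
    (p : V → V) (hp_inv : ∀ v, p (p v) = v) (hp_ne : ∀ v, p v ≠ v) :
    ∃ S : Finset V, (∀ v, v ∈ S ↔ p v ∉ S) ∧
      n ≤ 16 * (F.filter (fun e => e ∩ S = ∅)).card ∧
      16 * (F.filter (fun e => (e ∩ S).Nonempty)).card ≤ 15 * n := by
  obtain ⟨S, hS, hmiss⟩ := triangle_s1_pairing_upper_general (fun e he ↦ (hF e he).le)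
    (fun v ↦ (hdeg v).ge) hp_inv hp_ne fun v ↦ hpair v (p v) (hp_ne v).symm
  have hsplit := card_filter_inter_eq_empty_add_card_filter_inter_nonempty F S
  exact ⟨S, mem_transversals.1 hS, by omega, by omega⟩
end
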